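/- Let p be a prime with p ≡ 3 (mod 4). If p ≡ 3 (mod 8), then the number of even quadratic residues mod p lying strictly between 0 and p/2 equals (p−3)/8. If p ≡ 7 (mod 8), then the number of even quadratic residues mod p lying strictly between p/2 and p equals (p+1)/8. -/

import Mathlib

/-!
Let `χ` be an odd character modulo an odd `n`, and let `S` and `T` be the sums of `χ` over the
integers in `(0, n / 4)` and in `(n / 4, n / 2)`. The even integers in `(0, n / 2)` are the doubles
of those in `(0, n / 4)`, while the odd ones are `n - 2 * j` with `j` in `(n / 4, n / 2)`, so that
`S + T = χ 2 * (S - T)`. Hence `S = 0` when `χ 2 = -1` and `T = 0` when `χ 2 = 1`. Applied to the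
quadratic character modulo a prime `p`, with `χ 2` read off from `p % 8`, this says that among the
doubles of the integers in the quarter in question, residues and nonresidues are equally numerous.
-/

open Finset

section Reindexing

theorem filter_even_Ioc_zero (n : ℕ) : {k ∈ Ioc 0 n | Even k} = (Ioc 0 (n / 2)).image (2 * ·) := by
  ext k
  simp only [mem_filter, mem_image, mem_Ioc]
  constructor
  · rintro ⟨hk, j, rfl⟩
    exact ⟨j, by lia⟩
  · rintro ⟨j, hj, rfl⟩
    exact ⟨by lia, even_two_mul j⟩

theorem filter_not_even_Ioc_zero_half {n : ℕ} (hn : Odd n) :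
    {k ∈ Ioc 0 (n / 2) | ¬Even k} = (Ioc (n / 4) (n / 2)).image (n - 2 * ·) := by
  obtain ⟨m, rfl⟩ := hn
  ext k
  simp only [mem_filter, mem_image, mem_Ioc, Nat.not_even_iff]
  constructor
  · rintro ⟨hk, hodd⟩
    exact ⟨(2 * m + 1 - k) / 2, by lia⟩
  · rintro ⟨j, hj, rfl⟩
    lia

theorem card_filter_even_Ioc_zero (n : ℕ) (P : ℕ → Prop) [DecidablePred P] :
    #{k ∈ Ioc 0 n | Even k ∧ P k} = #{j ∈ Ioc 0 (n / 2) | P (2 * j)} := by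
  rw [← filter_filter, filter_even_Ioc_zero, filter_image,
    card_image_of_injective _ (mul_right_injective₀ two_ne_zero)]

theorem two_mul_card_filter_eq_one {ι : Type*} {s : Finset ι} {g : ι → ℤ}
    (hg : ∀ i ∈ s, g i = 1 ∨ g i = -1) :
    2 * (#{i ∈ s | g i = 1} : ℤ) = #s + ∑ i ∈ s, g i := by
  rw [natCast_card_filter, card_eq_sum_ones, Nat.cast_sum, ← sum_add_distrib, mul_sum]
  refine sum_congr rfl fun i hi ↦ ?_
  rcases hg i hi with h | h <;> simp [h]

end Reindexing

section OddCharacter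

variable {R : Type*} [CommRing R] {n : ℕ} {χ : DirichletCharacter R n}

theorem sum_quarters_eq_of_odd (hχ : χ.Odd) (hn : Odd n) :
    ∑ k ∈ Ioc 0 (n / 4), χ k + ∑ k ∈ Ioc (n / 4) (n / 2), χ k =
      χ 2 * (∑ k ∈ Ioc 0 (n / 4), χ k - ∑ k ∈ Ioc (n / 4) (n / 2), χ k) := by
  have heven : ∑ k ∈ Ioc 0 (n / 2) with Even k, χ k = χ 2 * ∑ j ∈ Ioc 0 (n / 4), χ j := by
    rw [filter_even_Ioc_zero, Nat.div_div_eq_div_mul,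
      sum_image (mul_right_injective₀ two_ne_zero).injOn, mul_sum]
    simp
  have hodd : ∑ k ∈ Ioc 0 (n / 2) with ¬Even k, χ k =
      -(χ 2 * ∑ j ∈ Ioc (n / 4) (n / 2), χ j) := by
    rw [filter_not_even_Ioc_zero_half hn, sum_image, mul_sum, ← sum_neg_distrib]
    · refine sum_congr rfl fun j hj ↦ ?_
      rw [mem_Ioc] at hj
      rw [Nat.cast_sub (by lia), ZMod.natCast_self, zero_sub, hχ.eval_neg]
      simp
    · intro i hi j hj hij
      simp only [coe_Ioc, Set.mem_Ioc] at hi hj hij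
      lia
  rw [sum_Ioc_consecutive _ (Nat.zero_le _) (by lia),
    ← sum_filter_add_sum_filter_not _ (fun k ↦ Even k), heven, hodd]
  ring

variable [IsAddTorsionFree R]

theorem sum_lower_quarter_eq_zero_of_odd (hχ : χ.Odd) (hn : Odd n) (h2 : χ 2 = -1) :
    ∑ k ∈ Ioc 0 (n / 4), χ k = 0 := by
  have h := sum_quarters_eq_of_odd hχ hn
  rw [h2] at h
  exact self_eq_neg.1 (by linear_combination h)

theorem sum_upper_quarter_eq_zero_of_odd (hχ : χ.Odd) (hn : Odd n) (h2 : χ 2 = 1) :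
    ∑ k ∈ Ioc (n / 4) (n / 2), χ k = 0 := by
  have h := sum_quarters_eq_of_odd hχ hn
  rw [h2] at h
  exact self_eq_neg.1 (by linear_combination h)

end OddCharacter

section QuadraticResidues

theorem exists_mem_range_mul_self_mod_eq_iff_isSquare {n : ℕ} [NeZero n] (k : ℕ) :
    (∃ x ∈ range n, x * x % n = k % n) ↔ IsSquare (k : ZMod n) := by
  simp only [← ZMod.natCast_eq_natCast_iff', Nat.cast_mul]
  constructor
  · rintro ⟨x, -, hx⟩
    exact ⟨x, hx.symm⟩
  · rintro ⟨y, hy⟩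
    exact ⟨y.val, mem_range.2 y.val_lt, by rw [ZMod.natCast_zmod_val, hy]⟩

theorem quadraticChar_two_eq_ite {F : Type*} [Field F] [Fintype F] [DecidableEq F]
    (hF : ringChar F ≠ 2) :
    quadraticChar F 2 = if Fintype.card F % 8 = 1 ∨ Fintype.card F % 8 = 7 then 1 else -1 := by
  rw [quadraticChar_two hF, ZMod.χ₈_nat_eq_if_mod_eight,
    if_neg (Nat.mod_two_ne_zero.2 (FiniteField.odd_card_of_char_ne_two hF))]

variable {p : ℕ} [Fact p.Prime]

theorem odd_quadraticChar_of_mod_four_eq_three (h : p % 4 = 3) :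
    DirichletCharacter.Odd (quadraticChar (ZMod p)) := by
  rw [DirichletCharacter.Odd, quadraticChar_neg_one (by rw [ZMod.ringChar_zmod_n]; lia), ZMod.card,
    ZMod.χ₄_nat_three_mod_four h]

theorem two_mul_card_even_squares (hp : p ≠ 2) (P : ℕ → Prop) [DecidablePred P] :
    2 * (#{k ∈ Icc 1 (p - 1) | Even k ∧ P k ∧ ∃ x ∈ range p, x * x % p = k % p} : ℤ) =
      #{j ∈ Ioc 0 (p / 2) | P (2 * j)} +
        quadraticChar (ZMod p) 2 *
          ∑ j ∈ Ioc 0 (p / 2) with P (2 * j), quadraticChar (ZMod p) j := by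
  have hodd : p % 2 = 1 := (Fact.out : p.Prime).eq_two_or_odd.resolve_left hp
  have hne : ∀ j ∈ ({j ∈ Ioc 0 (p / 2) | P (2 * j)} : Finset ℕ), ((2 * j : ℕ) : ZMod p) ≠ 0 := by
    intro j hj
    rw [mem_filter, mem_Ioc] at hj
    rw [Ne, ZMod.natCast_eq_zero_iff]
    exact Nat.not_dvd_of_pos_of_lt (by lia) (by lia)
  have hIcc : Icc 1 (p - 1) = Ioc 0 (p - 1) := rfl
  have hhalf : (p - 1) / 2 = p / 2 := by lia
  have hresidue : ({j ∈ Ioc 0 (p / 2) | P (2 * j) ∧ ∃ x ∈ range p, x * x % p = 2 * j % p}) =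
      {j ∈ {j ∈ Ioc 0 (p / 2) | P (2 * j)} | quadraticChar (ZMod p) (2 * j : ℕ) = 1} := by
    rw [← filter_filter]
    refine filter_congr fun j hj ↦ ?_
    rw [exists_mem_range_mul_self_mod_eq_iff_isSquare, quadraticChar_one_iff_isSquare (hne j hj)]
  rw [hIcc, card_filter_even_Ioc_zero, hhalf, hresidue,
    two_mul_card_filter_eq_one fun j hj ↦ quadraticChar_dichotomy (hne j hj), mul_sum]
  simp only [Nat.cast_mul, Nat.cast_ofNat, map_mul]

end QuadraticResidues

theorem count_even_qr_in_halves (p : ℕ) (hp : p.Prime) (h3 : p % 4 = 3) :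
    (p % 8 = 3 →
      ((Finset.Icc 1 (p - 1)).filter
        (fun k => Even k ∧ 2 * k < p ∧ ∃ x ∈ Finset.range p, x * x % p = k % p)).card
        = (p - 3) / 8) ∧
    (p % 8 = 7 →
      ((Finset.Icc 1 (p - 1)).filter
        (fun k => Even k ∧ p < 2 * k ∧ ∃ x ∈ Finset.range p, x * x % p = k % p)).card
        = (p + 1) / 8) := by
  have : Fact p.Prime := ⟨hp⟩
  have hp2 : p ≠ 2 := by lia
  have hodd : Odd p := hp.odd_of_ne_two hp2
  have hχ := odd_quadraticChar_of_mod_four_eq_three h3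
  have hχ2 := quadraticChar_two_eq_ite (F := ZMod p) (by rwa [ZMod.ringChar_zmod_n])
  rw [ZMod.card] at hχ2
  refine ⟨fun h8 ↦ ?_, fun h8 ↦ ?_⟩
  · have hlower : {j ∈ Ioc 0 (p / 2) | 2 * (2 * j) < p} = Ioc 0 (p / 4) := by grind
    have hcount := two_mul_card_even_squares hp2 (2 * · < p)
    rw [hlower, sum_lower_quarter_eq_zero_of_odd hχ hodd (by simp [hχ2, h8]), mul_zero,
      Nat.card_Ioc] at hcount
    lia
  · have hupper : {j ∈ Ioc 0 (p / 2) | p < 2 * (2 * j)} = Ioc (p / 4) (p / 2) := by grind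
    have hcount := two_mul_card_even_squares hp2 (p < 2 * ·)
    rw [hupper, sum_upper_quarter_eq_zero_of_odd hχ hodd (by simp [hχ2, h8]), mul_zero,
      Nat.card_Ioc] at hcount
    lia
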